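/- Fix d ∈ ℕ and ε ∈ (0,1), and let N be a natural number with N ≥ ((42·d^{7/4} + 16·d^{3/2})/ε)². Let s = (s₁, …, s_d) where s₁, …, s_d are i.i.d., each distributed as the sum of N independent random variables uniform on {−1/√N, +1/√N} (a normalized binomial). Let a ∼ N(0, I_d) be a standard Gaussian vector in ℝ^d. Then for every convex measurable set S ⊆ ℝ^d, |Pr[s ∈ S] − Pr[a ∈ S]| ≤ ε. -/

import Mathlib

open MeasureTheory ProbabilityTheory Real
open scoped ENNReal

/-!
A convex set meets every line parallel to a coordinate axis in an interval. Exchanging the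
coordinates of the two random vectors one at a time (Lindeberg) therefore costs at most `d` times
the largest discrepancy, over intervals, between the normalized binomial and the standard Gaussian.

In dimension one, put `h = 1 / √N`, let `W` be the normalized binomial, and let `f` solve Stein's
equation `f' w - w * f w = g w` for a continuous `g` with values in `[-1, 1]` and Gaussian mean `0`.
The discrete Stein identity `E[W f(W)] = N h E[(f(W' + h) - f(W' - h)) / 2]`, where `W'` is the walk
after `N - 1` steps, and the mean value theorem compare `E[W f(W)]` with values of `f'` at distance
at most `2 * h` from `W`. The error in the term `w * f w` is at most `16 * h`, and the shift by
`2 * h` in `g` is harmless if `g` is the smoothed indicator of a neighbourhood of a set `B`. This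
gives the Prokhorov-type bound `P(W ∈ B) ≤ γ(thickening (3 * h) B) + 16 * h`. The frontier of an
interval has at most two points, so for intervals the thickening costs at most `12 * h`; the total
error is `28 * d / √N ≤ ε`.
-/

section CoordinateReplacement

variable {ι : Type*} [Fintype ι] [DecidableEq ι] {α : ι → Type*} [∀ i, MeasurableSpace (α i)]

theorem measurePreserving_update (μ : ∀ i, Measure (α i)) [∀ i, SigmaFinite (μ i)] (i : ι)
    [IsProbabilityMeasure (μ i)] (τ : Measure (α i)) [SigmaFinite τ] :
    MeasurePreserving (fun p : (∀ j, α j) × α i => Function.update p.1 i p.2)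
      ((Measure.pi μ).prod τ) (Measure.pi (Function.update μ i τ)) := by
  have hσ : ∀ j, SigmaFinite (Function.update μ i τ j) := fun j => by
    rcases eq_or_ne j i with rfl | hj
    · rwa [Function.update_self]
    · rw [Function.update_of_ne hj]; infer_instance
  refine ⟨measurable_update', (Measure.pi_eq fun B hB => ?_).symm⟩
  have preimage_box : (fun p : (∀ j, α j) × α i => Function.update p.1 i p.2) ⁻¹' Set.univ.pi B =
      Set.univ.pi (Function.update B i Set.univ) ×ˢ B i := by
    ext ⟨x, t⟩
    simp only [Set.mem_preimage, Set.mem_univ_pi, Set.mem_prod]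
    rw [Function.forall_update_iff x (fun j y => y ∈ B j),
      Function.forall_update_iff B (fun j b => x j ∈ b)]
    simp [and_comm]
  have prod_erase_eq : ∏ j ∈ Finset.univ.erase i, μ j (Function.update B i Set.univ j) =
      ∏ j ∈ Finset.univ.erase i, Function.update μ i τ j (B j) :=
    Finset.prod_congr rfl fun j hj => by simp [Finset.ne_of_mem_erase hj]
  rw [Measure.map_apply measurable_update' (.univ_pi hB), preimage_box, Measure.prod_prod,
    Measure.pi_pi, ← Finset.mul_prod_erase _ _ (Finset.mem_univ i), prod_erase_eq,
    ← Finset.mul_prod_erase _ _ (Finset.mem_univ i)]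
  simp [mul_comm]

variable {S : Set (∀ i, α i)}

theorem integrable_measureReal_update_preimage (μ : ∀ i, Measure (α i))
    [∀ i, IsFiniteMeasure (μ i)] (hS : MeasurableSet S) (i : ι) (τ : Measure (α i))
    [IsFiniteMeasure τ] :
    Integrable (fun x => τ.real (Function.update x i ⁻¹' S)) (Measure.pi μ) :=
  Measure.integrable_measure_prodMk_left (measurable_update' hS) (measure_ne_top _ _)

theorem pi_update_real_eq_integral (μ : ∀ i, Measure (α i)) [∀ i, SigmaFinite (μ i)]
    (hS : MeasurableSet S) (i : ι) [IsProbabilityMeasure (μ i)] (τ : Measure (α i))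
    [IsFiniteMeasure τ] :
    (Measure.pi (Function.update μ i τ)).real S =
      ∫ x, τ.real (Function.update x i ⁻¹' S) ∂Measure.pi μ := by
  have hmeas := measurable_measure_prodMk_left (ν := τ) ((measurable_update' (a := i)) hS)
  rw [measureReal_def, ← (measurePreserving_update μ i τ).measure_preimage hS.nullMeasurableSet,
    Measure.prod_apply (measurable_update' hS)]
  exact (integral_toReal hmeas.aemeasurable (.of_forall fun x => measure_lt_top _ _)).symm

theorem abs_pi_real_sub_pi_real_le (μ ν : ∀ i, Measure (α i)) [∀ i, IsProbabilityMeasure (μ i)]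
    [∀ i, IsProbabilityMeasure (ν i)] (hS : MeasurableSet S) {K : ι → ℝ}
    (hK : ∀ i x, |(μ i).real (Function.update x i ⁻¹' S) -
      (ν i).real (Function.update x i ⁻¹' S)| ≤ K i) :
    |(Measure.pi μ).real S - (Measure.pi ν).real S| ≤ ∑ i, K i := by
  suffices hybrid : ∀ s : Finset ι,
      |(Measure.pi μ).real S - (Measure.pi (s.piecewise ν μ)).real S| ≤ ∑ i ∈ s, K i by
    simpa using hybrid Finset.univ
  intro s
  induction s using Finset.induction_on with
  | empty => simp
  | insert i s hi ih =>
    set ρ := s.piecewise ν μ with hρ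
    have : ∀ j, IsProbabilityMeasure (ρ j) := fun j => by
      by_cases hj : j ∈ s <;> simp only [hρ, Finset.piecewise, hj, if_true, if_false] <;>
        infer_instance
    have hρi : Function.update ρ i (μ i) = ρ :=
      Function.update_eq_iff.2 ⟨by simp [hρ, hi], fun _ _ => rfl⟩
    have exchange : |(Measure.pi ρ).real S - (Measure.pi (Function.update ρ i (ν i))).real S| ≤
        K i := by
      have eq_integral := pi_update_real_eq_integral ρ hS i (μ i)
      rw [hρi] at eq_integral
      rw [eq_integral, pi_update_real_eq_integral ρ hS, ← integral_sub
        (integrable_measureReal_update_preimage ρ hS i _)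
        (integrable_measureReal_update_preimage ρ hS i _)]
      simp_rw [← Real.norm_eq_abs] at hK ⊢
      simpa only [probReal_univ, mul_one] using
        norm_integral_le_of_norm_le_const (μ := Measure.pi ρ) (.of_forall (hK i))
    rw [Finset.piecewise_insert, Finset.sum_insert hi, add_comm (K i)]
    exact (abs_sub_le _ _ _).trans (add_le_add ih exchange)

end CoordinateReplacement

section Thickening

theorem inter_frontier_nonempty_of_isPreconnected {X : Type*} [TopologicalSpace X] {t A : Set X}
    (ht : IsPreconnected t) (hA : (t ∩ A).Nonempty) (hAc : (t \ A).Nonempty) :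
    (t ∩ frontier A).Nonempty := by
  by_contra hempty
  have avoid : t ⊆ (frontier A)ᶜ := fun x hx hxA => hempty ⟨x, hx, hxA⟩
  have cover : t ⊆ interior A ∪ interior Aᶜ := by
    rwa [← compl_frontier_eq_union_interior]
  obtain ⟨x, hxt, hxA⟩ := hA
  obtain ⟨y, hyt, hyA⟩ := hAc
  obtain ⟨z, -, hzA, hzAc⟩ := ht _ _ isOpen_interior isOpen_interior cover
    ⟨x, hxt, (cover hxt).resolve_right fun h => interior_subset h hxA⟩
    ⟨y, hyt, (cover hyt).resolve_left fun h => hyA (interior_subset h)⟩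
  exact interior_subset hzAc (interior_subset hzA)

theorem thickening_diff_subset_thickening_frontier {E : Type*} [SeminormedAddCommGroup E]
    [NormedSpace ℝ E] (δ : ℝ) (A : Set E) :
    Metric.thickening δ A \ A ⊆ Metric.thickening δ (frontier A) := by
  rintro x ⟨hx, hxA⟩
  obtain ⟨y, hyA, hxy⟩ := Metric.mem_thickening_iff.1 hx
  obtain ⟨z, hz, hzA⟩ := inter_frontier_nonempty_of_isPreconnected
    (convex_segment x y).isPreconnected ⟨y, right_mem_segment ℝ x y, hyA⟩
    ⟨x, left_mem_segment ℝ x y, hxA⟩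
  have dist_le : dist x z ≤ dist x y := by
    linarith [dist_add_dist_of_mem_segment hz, dist_nonneg (x := z) (y := y)]
  exact Metric.mem_thickening_iff.2 ⟨z, hzA, dist_le.trans_lt hxy⟩

theorem abs_measureReal_sub_le_of_le_thickening {E : Type*} [SeminormedAddCommGroup E]
    [NormedSpace ℝ E] [MeasurableSpace E] [OpensMeasurableSpace E] {μ ν : Measure E}
    [IsProbabilityMeasure μ] [IsProbabilityMeasure ν] {δ η : ℝ}
    (h : ∀ B, MeasurableSet B → μ.real B ≤ ν.real (Metric.thickening δ B) + η) {A : Set E}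
    (hA : MeasurableSet A) :
    |μ.real A - ν.real A| ≤ ν.real (Metric.thickening δ (frontier A)) + η := by
  have one_sided : ∀ B, MeasurableSet B →
      μ.real B - ν.real B ≤ ν.real (Metric.thickening δ (frontier B)) + η := fun B hB => by
    have cover : Metric.thickening δ B ⊆ B ∪ Metric.thickening δ (frontier B) :=
      Set.sdiff_subset_iff.1 (thickening_diff_subset_thickening_frontier δ B)
    linarith [h B hB, measureReal_mono (μ := ν) cover,
      measureReal_union_le (μ := ν) B (Metric.thickening δ (frontier B))]
  have compl_bound := one_sided Aᶜ hA.compl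
  rw [frontier_compl, probReal_compl_eq_one_sub hA, probReal_compl_eq_one_sub hA] at compl_bound
  exact abs_sub_le_iff.2 ⟨one_sided A hA, by linarith⟩

theorem mem_interior_of_ordConnected {α : Type*} [LinearOrder α] [TopologicalSpace α]
    [OrderTopology α] {s : Set α} (hs : s.OrdConnected) {x y z : α} (hx : x ∈ closure s)
    (hz : z ∈ closure s) (hxy : x < y) (hyz : y < z) : y ∈ interior s := by
  obtain ⟨x', hx'y, hx's⟩ := mem_closure_iff.1 hx _ isOpen_Iio hxy
  obtain ⟨z', hyz', hz's⟩ := mem_closure_iff.1 hz _ isOpen_Ioi hyz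
  exact mem_interior_iff_mem_nhds.2
    (Filter.mem_of_superset (Icc_mem_nhds hx'y hyz') (hs.out hx's hz's))

theorem exists_frontier_subset_pair_of_ordConnected {α : Type*} [LinearOrder α] [Nonempty α]
    [TopologicalSpace α] [OrderTopology α] {s : Set α} (hs : s.OrdConnected) :
    ∃ a b, frontier s ⊆ {a, b} := by
  have no_middle : ∀ x ∈ frontier s, ∀ y ∈ frontier s, ∀ z ∈ frontier s, x < y → ¬ y < z :=
    fun x hx y hy z hz hxy hyz => hy.2 (mem_interior_of_ordConnected hs hx.1 hz.1 hxy hyz)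
  rcases (frontier s).subsingleton_or_nontrivial with hsub | hnontriv
  · inhabit α
    rcases hsub.eq_empty_or_singleton with hempty | ⟨p, hp⟩
    · exact ⟨default, default, by simp [hempty]⟩
    · exact ⟨p, p, by simp [hp]⟩
  · obtain ⟨p, hp, q, hq, hpq⟩ := hnontriv.exists_lt
    refine ⟨p, q, fun r hr => ?_⟩
    rcases lt_trichotomy r p with hrp | rfl | hpr
    · exact absurd hpq (no_middle r hr p hp q hq hrp)
    · exact Or.inl rfl
    rcases lt_trichotomy r q with hrq | rfl | hqr
    · exact absurd hrq (no_middle p hp r hr q hq hpr)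
    · exact Or.inr rfl
    · exact absurd hqr (no_middle p hp q hq r hr hpq)

theorem volume_thickening_frontier_le_of_ordConnected {s : Set ℝ} (hs : s.OrdConnected) (δ : ℝ) :
    volume (Metric.thickening δ (frontier s)) ≤ ENNReal.ofReal (4 * δ) := by
  obtain ⟨a, b, hab⟩ := exists_frontier_subset_pair_of_ordConnected hs
  calc volume (Metric.thickening δ (frontier s))
      ≤ volume (Metric.ball a δ ∪ Metric.ball b δ) := by
        refine measure_mono ((Metric.thickening_subset_of_subset δ hab).trans_eq ?_)
        rw [Set.insert_eq, Metric.thickening_union, Metric.thickening_singleton,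
          Metric.thickening_singleton]
    _ ≤ ENNReal.ofReal (2 * δ) + ENNReal.ofReal (2 * δ) := by
        simpa only [Real.volume_ball] using
          measure_union_le (μ := (volume : Measure ℝ)) (Metric.ball a δ) (Metric.ball b δ)
    _ = ENNReal.ofReal (4 * δ) := by
        rw [← two_mul, ← ENNReal.ofReal_ofNat 2, ← ENNReal.ofReal_mul zero_le_two, ← mul_assoc]
        norm_num

theorem gaussianPDFReal_le_inv_sqrt (μ : ℝ) (v : NNReal) (x : ℝ) :
    gaussianPDFReal μ v x ≤ (√(2 * π * v))⁻¹ := by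
  refine mul_le_of_le_one_right (by positivity) (exp_le_one_iff.2 ?_)
  rw [neg_div]
  exact neg_nonpos.2 (by positivity)

theorem gaussianReal_le_volume (μ : ℝ) {v : NNReal} (hv : 1 ≤ 2 * π * v) :
    gaussianReal μ v ≤ volume := by
  have hv0 : v ≠ 0 := by
    rintro rfl
    norm_num at hv
  calc gaussianReal μ v = volume.withDensity (gaussianPDF μ v) := gaussianReal_of_var_ne_zero μ hv0
    _ ≤ volume.withDensity 1 := withDensity_mono (.of_forall fun x => by
        rw [gaussianPDF, Pi.one_apply, ENNReal.ofReal_le_one]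
        exact (gaussianPDFReal_le_inv_sqrt μ v x).trans
          (inv_le_one_of_one_le₀ (one_le_sqrt.2 hv)))
    _ = volume := withDensity_one

theorem gaussianReal_real_thickening_frontier_le {s : Set ℝ} (hs : s.OrdConnected) {δ : ℝ}
    (hδ : 0 ≤ δ) : (gaussianReal 0 1).real (Metric.thickening δ (frontier s)) ≤ 4 * δ := by
  refine ENNReal.toReal_le_of_le_ofReal (by positivity)
    ((gaussianReal_le_volume 0 ?_ _).trans (volume_thickening_frontier_le_of_ordConnected hs δ))
  rw [NNReal.coe_one]
  linarith [pi_gt_three]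

end Thickening

section RandomWalk

/-- The Markov operator of one step of the symmetric random walk with step `h`. -/
noncomputable def stepAverage (h : ℝ) : Module.End ℝ (ℝ → ℝ) where
  toFun F x := (F (x + h) + F (x - h)) / 2
  map_add' F G := by ext x; simp only [Pi.add_apply]; ring
  map_smul' c F := by ext x; simp only [Pi.smul_apply, smul_eq_mul, RingHom.id_apply]; ring

/-- The symmetric difference of step `h`, not normalised by `h`. -/
noncomputable def stepDifference (h : ℝ) : Module.End ℝ (ℝ → ℝ) where
  toFun F x := (F (x + h) - F (x - h)) / 2
  map_add' F G := by ext x; simp only [Pi.add_apply]; ring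
  map_smul' c F := by ext x; simp only [Pi.smul_apply, smul_eq_mul, RingHom.id_apply]; ring

theorem stepAverage_apply (h : ℝ) (F : ℝ → ℝ) (x : ℝ) :
    stepAverage h F x = (F (x + h) + F (x - h)) / 2 := rfl

theorem stepDifference_apply (h : ℝ) (F : ℝ → ℝ) (x : ℝ) :
    stepDifference h F x = (F (x + h) - F (x - h)) / 2 := rfl

theorem commute_stepAverage_stepDifference (h : ℝ) :
    Commute (stepAverage h) (stepDifference h) := by
  ext F x
  simp only [Module.End.mul_apply, stepAverage_apply, stepDifference_apply]
  ring_nf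

theorem stepAverage_mul_mulLeft_id (h : ℝ) :
    stepAverage h * LinearMap.mulLeft ℝ (id : ℝ → ℝ) =
      LinearMap.mulLeft ℝ id * stepAverage h + h • stepDifference h := by
  ext F x
  simp only [Module.End.mul_apply, LinearMap.mulLeft_apply, Pi.mul_apply, id_eq,
    LinearMap.add_apply, LinearMap.smul_apply, Pi.add_apply, Pi.smul_apply, smul_eq_mul,
    stepAverage_apply, stepDifference_apply]
  ring

theorem pow_succ_mul_eq_of_mul_eq_mul_add {R : Type*} [Ring R] {a x c : R} (h : a * x = x * a + c)
    (hac : Commute a c) (n : ℕ) :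
    a ^ (n + 1) * x = x * a ^ (n + 1) + (n + 1) • (a ^ n * c) := by
  induction n with
  | zero => simpa using h
  | succ n ih =>
    calc a ^ (n + 1 + 1) * x = a * (a ^ (n + 1) * x) := by rw [pow_succ', mul_assoc]
      _ = (a * x) * a ^ (n + 1) + (n + 1) • (a ^ (n + 1) * c) := by
        rw [ih, mul_add, mul_smul_comm, ← mul_assoc, ← mul_assoc, ← pow_succ']
      _ = x * a ^ (n + 1 + 1) + (n + 1 + 1) • (a ^ (n + 1) * c) := by
        rw [h, add_mul, (hac.symm.pow_right (n + 1)).eq, mul_assoc, ← pow_succ',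
          succ_nsmul _ (n + 1)]
        abel

/-- The random walk counterpart of the Gaussian integration by parts `E[W F(W)] = E[F'(W)]`. -/
theorem stepAverage_pow_succ_id_mul_apply_zero (h : ℝ) (n : ℕ) (F : ℝ → ℝ) :
    (stepAverage h ^ (n + 1)) (id * F) 0 =
      (n + 1) * h * (stepAverage h ^ n) (stepDifference h F) 0 := by
  have commutator := congrFun (LinearMap.congr_fun (pow_succ_mul_eq_of_mul_eq_mul_add
    (stepAverage_mul_mulLeft_id h)
    ((commute_stepAverage_stepDifference h).smul_right h) n) F) 0
  simp only [← Nat.cast_smul_eq_nsmul ℝ, Module.End.mul_apply, LinearMap.mulLeft_apply,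
    LinearMap.add_apply, LinearMap.smul_apply, map_smul, Pi.add_apply, Pi.mul_apply, Pi.smul_apply,
    id_eq, zero_mul, zero_add, smul_eq_mul, Nat.cast_add, Nat.cast_one] at commutator
  rw [commutator]
  ring

theorem stepAverage_pow_mono (h : ℝ) (n : ℕ) : Monotone (stepAverage h ^ n) := by
  have step_mono : Monotone (stepAverage h) := fun F G hFG x => by
    simp only [stepAverage_apply]
    linarith [hFG (x + h), hFG (x - h)]
  rw [Module.End.coe_pow]
  exact step_mono.iterate n

theorem stepAverage_pow_const (h : ℝ) (n : ℕ) (c : ℝ) :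
    (stepAverage h ^ n) (Function.const ℝ c) = Function.const ℝ c := by
  rw [Module.End.pow_apply]
  exact Function.iterate_fixed (by ext x; simp [stepAverage_apply]) n

theorem stepAverage_pow_succ_sq_apply_zero {h : ℝ} {n : ℕ} (hn : (n + 1) * h ^ 2 = 1) :
    (stepAverage h ^ (n + 1)) (id * id) 0 = 1 := by
  have difference_id : stepDifference h id = Function.const ℝ h := by
    ext x
    simp only [stepDifference_apply, id_eq, Function.const_apply]
    ring
  rw [stepAverage_pow_succ_id_mul_apply_zero, difference_id, stepAverage_pow_const,
    Function.const_apply]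
  linear_combination hn

theorem stepAverage_pow_succ_le_of_le_deriv {h : ℝ} {n : ℕ} (hh : 0 < h) (hn : (n + 1) * h ^ 2 = 1)
    {f f' H : ℝ → ℝ} (hf : ∀ x, HasDerivAt f (f' x) x)
    (hH : ∀ u y, |y - u| ≤ 2 * h → H u ≤ f' y) :
    (stepAverage h ^ (n + 1)) H 0 ≤ (stepAverage h ^ (n + 1)) (id * f) 0 := by
  have average_le : h • stepAverage h H ≤ stepDifference h f := fun x => by
    obtain ⟨ξ, ⟨hξl, hξr⟩, hξ⟩ := exists_hasDerivAt_eq_slope f f' (by linarith : x - h < x + h)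
      (fun y _ => (hf y).continuousAt.continuousWithinAt) fun y _ => hf y
    have right_le : H (x + h) ≤ f' ξ := hH _ _ (abs_le.2 ⟨by linarith, by linarith⟩)
    have left_le : H (x - h) ≤ f' ξ := hH _ _ (abs_le.2 ⟨by linarith, by linarith⟩)
    have slope : f (x + h) - f (x - h) = 2 * h * f' ξ := by
      rw [hξ, add_sub_sub_cancel, ← two_mul, mul_div_cancel₀ _ (by positivity)]
    simp only [Pi.smul_apply, smul_eq_mul, stepAverage_apply, stepDifference_apply, slope]
    nlinarith
  calc (stepAverage h ^ (n + 1)) H 0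
      = (n + 1) * h * (stepAverage h ^ n) (h • stepAverage h H) 0 := by
        rw [map_smul, pow_succ, Module.End.mul_apply, Pi.smul_apply, smul_eq_mul]
        linear_combination -((stepAverage h ^ n) (stepAverage h H) 0) * hn
    _ ≤ (n + 1) * h * (stepAverage h ^ n) (stepDifference h f) 0 := by
        gcongr
        exact stepAverage_pow_mono h n average_le 0
    _ = _ := (stepAverage_pow_succ_id_mul_apply_zero h n f).symm

end RandomWalk

section RandomWalkLaw

open scoped MeasureTheory

/-- The uniform probability measure on `{-h, h}`. -/
noncomputable def rademacher (h : ℝ) : Measure ℝ :=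
  (2 : ℝ≥0∞)⁻¹ • Measure.dirac (-h) + (2 : ℝ≥0∞)⁻¹ • Measure.dirac h

instance (h : ℝ) : IsProbabilityMeasure (rademacher h) :=
  ⟨by simp [rademacher, ENNReal.inv_two_add_inv_two]⟩

theorem rademacher_conv_real_apply (h : ℝ) (μ : Measure ℝ) [IsFiniteMeasure μ] {s : Set ℝ}
    (hs : MeasurableSet s) :
    (rademacher h ∗ μ).real s = (μ.real ((-h + ·) ⁻¹' s) + μ.real ((h + ·) ⁻¹' s)) / 2 := by
  rw [rademacher, Measure.add_conv, Measure.conv_smul_left, Measure.conv_smul_left,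
    Measure.dirac_conv, Measure.dirac_conv, ← smul_add, measureReal_ennreal_smul_apply,
    measureReal_add_apply, map_measureReal_apply (measurable_const_add _) hs,
    map_measureReal_apply (measurable_const_add _) hs, ENNReal.toReal_inv, ENNReal.toReal_ofNat]
  ring

theorem map_sum_pi_succ {M : Type*} [AddCommMonoid M] [MeasurableSpace M] [MeasurableAdd₂ M]
    (μ : Measure M) [SigmaFinite μ] (n : ℕ) :
    (Measure.pi fun _ : Fin (n + 1) => μ).map (fun x => ∑ i, x i) =
      μ ∗ (Measure.pi fun _ : Fin n => μ).map (fun x => ∑ i, x i) := by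
  have split := measurePreserving_piFinSuccAbove (fun _ : Fin (n + 1) => μ) 0
  have sum_eq : (fun x : Fin (n + 1) → M => ∑ i, x i) =
      (fun p : M × M => p.1 + p.2) ∘ Prod.map id (fun y : Fin n → M => ∑ i, y i) ∘
        MeasurableEquiv.piFinSuccAbove (fun _ => M) 0 := by
    ext x
    simp [Fin.sum_univ_succ, Fin.tail]
  rw [sum_eq, ← Measure.map_map (by fun_prop) (by fun_prop),
    ← Measure.map_map (by fun_prop) (by fun_prop), split.map_eq,
    ← Measure.map_prod_map _ _ measurable_id (by fun_prop), Measure.map_id]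
  rfl

/-- The law at time `n` of the symmetric random walk on `ℝ` with step `h`, started at `0`. -/
noncomputable def randomWalkLaw (h : ℝ) (n : ℕ) : Measure ℝ :=
  (Measure.pi fun _ : Fin n => rademacher h).map fun x => ∑ i, x i

instance (h : ℝ) (n : ℕ) : IsProbabilityMeasure (randomWalkLaw h n) :=
  Measure.isProbabilityMeasure_map (by fun_prop)

theorem randomWalkLaw_zero (h : ℝ) : randomWalkLaw h 0 = Measure.dirac 0 := by
  simp [randomWalkLaw]

theorem randomWalkLaw_succ (h : ℝ) (n : ℕ) :
    randomWalkLaw h (n + 1) = rademacher h ∗ randomWalkLaw h n :=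
  map_sum_pi_succ (rademacher h) n

theorem randomWalkLaw_real_preimage_add (h : ℝ) (n : ℕ) {s : Set ℝ} (hs : MeasurableSet s)
    (x : ℝ) :
    (randomWalkLaw h n).real ((x + ·) ⁻¹' s) = (stepAverage h ^ n) (s.indicator 1) x := by
  induction n generalizing x with
  | zero =>
    rw [randomWalkLaw_zero, pow_zero, Module.End.one_apply, measureReal_def,
      Measure.dirac_apply' _ (measurable_const_add x hs)]
    by_cases hx : x ∈ s <;> simp [hx]
  | succ n ih =>
    rw [randomWalkLaw_succ, rademacher_conv_real_apply h _ (measurable_const_add x hs), pow_succ',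
      Module.End.mul_apply, stepAverage_apply, ← ih, ← ih, add_comm]
    simp only [Set.preimage_preimage, add_assoc, sub_eq_add_neg]

theorem randomWalkLaw_real_apply (h : ℝ) (n : ℕ) {s : Set ℝ} (hs : MeasurableSet s) :
    (randomWalkLaw h n).real s = (stepAverage h ^ n) (s.indicator 1) 0 := by
  simpa only [zero_add, Set.preimage_id'] using randomWalkLaw_real_preimage_add h n hs 0

end RandomWalkLaw

section SteinEquation

theorem hasDerivAt_integral_Iic {E : Type*} [NormedAddCommGroup E] [NormedSpace ℝ E]
    [CompleteSpace E] {g : ℝ → E} (hg : Continuous g) (hgi : Integrable g) (w : ℝ) :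
    HasDerivAt (fun w => ∫ x in Set.Iic w, g x) (g w) w := by
  have integral_eq : (fun w => ∫ x in Set.Iic w, g x) =
      fun w => (∫ x in Set.Iic 0, g x) + ∫ x in (0 : ℝ)..w, g x := by
    ext w
    rw [← intervalIntegral.integral_Iic_sub_Iic hgi.integrableOn hgi.integrableOn, add_sub_cancel]
  rw [integral_eq]
  exact (hg.integral_hasStrictDerivAt 0 w).hasDerivAt.const_add _

theorem hasDerivAt_gaussianPDFReal (μ : ℝ) (v : NNReal) (x : ℝ) :
    HasDerivAt (gaussianPDFReal μ v) (-((x - μ) / v) * gaussianPDFReal μ v x) x := by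
  have exponent : HasDerivAt (fun y => -(y - μ) ^ 2 / (2 * v)) (-((x - μ) / v)) x :=
    ((((hasDerivAt_id x).sub_const μ).pow 2).neg.div_const _).congr_deriv (by
      simp only [id_eq, Nat.cast_ofNat, Nat.add_one_sub_one, pow_one, mul_one]
      rw [neg_div, mul_div_mul_left _ _ two_ne_zero])
  exact (exponent.exp.const_mul _).congr_deriv (by rw [gaussianPDFReal]; ring)

theorem gaussianPDFReal_zero_neg (v : NNReal) (x : ℝ) :
    gaussianPDFReal 0 v (-x) = gaussianPDFReal 0 v x := by
  simp [gaussianPDFReal]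

theorem continuous_gaussianPDFReal (μ : ℝ) (v : NNReal) : Continuous (gaussianPDFReal μ v) :=
  continuous_iff_continuousAt.2 fun x => (hasDerivAt_gaussianPDFReal μ v x).continuousAt

theorem integrable_id_mul_gaussianPDFReal :
    Integrable fun x => x * gaussianPDFReal 0 1 x := by
  refine ((integrable_mul_exp_neg_mul_sq (b := 1 / 2) (by norm_num)).const_mul
    (√(2 * π * 1))⁻¹).congr (.of_forall fun x => ?_)
  simp only [gaussianPDFReal, NNReal.coe_one]
  ring_nf

theorem integral_Ioi_id_mul_gaussianPDFReal (w : ℝ) :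
    ∫ x in Set.Ioi w, x * gaussianPDFReal 0 1 x = gaussianPDFReal 0 1 w := by
  have deriv_neg : ∀ x, HasDerivAt (fun x => -gaussianPDFReal 0 1 x)
      (x * gaussianPDFReal 0 1 x) x := fun x =>
    (hasDerivAt_gaussianPDFReal 0 1 x).neg.congr_deriv (by simp)
  have integrableOn := integrable_id_mul_gaussianPDFReal.integrableOn (s := Set.Ioi w)
  have tendsto_zero := tendsto_zero_of_hasDerivAt_of_integrableOn_Ioi (fun x _ => deriv_neg x)
    integrableOn (integrable_gaussianPDFReal 0 1).neg.integrableOn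
  simpa using integral_Ioi_of_hasDerivAt_of_tendsto' (fun x _ => deriv_neg x) integrableOn
    tendsto_zero

theorem mul_integral_Ioi_gaussianPDFReal_le (w : ℝ) :
    w * ∫ x in Set.Ioi w, gaussianPDFReal 0 1 x ≤ gaussianPDFReal 0 1 w := by
  rw [← integral_const_mul, ← integral_Ioi_id_mul_gaussianPDFReal w]
  exact setIntegral_mono_on ((integrable_gaussianPDFReal 0 1).const_mul w).integrableOn
    integrable_id_mul_gaussianPDFReal.integrableOn measurableSet_Ioi fun x hx =>
      mul_le_mul_of_nonneg_right (le_of_lt hx) (gaussianPDFReal_nonneg 0 1 x)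

theorem neg_mul_integral_Iic_gaussianPDFReal_le (w : ℝ) :
    -w * ∫ x in Set.Iic w, gaussianPDFReal 0 1 x ≤ gaussianPDFReal 0 1 w := by
  have reflect := integral_comp_neg_Iic w (gaussianPDFReal 0 1)
  simp only [gaussianPDFReal_zero_neg] at reflect
  rw [reflect, ← gaussianPDFReal_zero_neg 1 w]
  exact mul_integral_Ioi_gaussianPDFReal_le (-w)

theorem one_le_six_mul_gaussianPDFReal {x : ℝ} (hx : |x| ≤ 1) :
    1 ≤ 6 * gaussianPDFReal 0 1 x := by
  have sqrt_le : √(2 * π) ≤ 3 := Real.sqrt_le_iff.2 ⟨by norm_num, by linarith [pi_lt_d2]⟩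
  have half_le : 1 / 2 ≤ exp (-x ^ 2 / 2) := by
    linarith [add_one_le_exp (-x ^ 2 / 2), sq_le_one_iff_abs_le_one x |>.2 hx]
  have pdf_eq : gaussianPDFReal 0 1 x = exp (-x ^ 2 / 2) / √(2 * π) := by
    simp [gaussianPDFReal, div_eq_inv_mul]
  rw [pdf_eq, ← mul_div_assoc, one_le_div (by positivity)]
  linarith

/-- The solution of Stein's equation `f' w - w * f w = g w` which is bounded when `g` is bounded
and centred for the standard Gaussian measure. -/
noncomputable def steinSolution (g : ℝ → ℝ) (w : ℝ) : ℝ :=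
  (∫ x in Set.Iic w, gaussianPDFReal 0 1 x * g x) / gaussianPDFReal 0 1 w

variable {g : ℝ → ℝ}

theorem hasDerivAt_steinSolution (hg : Continuous g)
    (hgi : Integrable fun x => gaussianPDFReal 0 1 x * g x) (w : ℝ) :
    HasDerivAt (steinSolution g) (w * steinSolution g w + g w) w := by
  have pdf_ne : gaussianPDFReal 0 1 w ≠ 0 := (gaussianPDFReal_pos 0 1 w one_ne_zero).ne'
  refine ((hasDerivAt_integral_Iic ((continuous_gaussianPDFReal 0 1).mul hg) hgi w).div
    (hasDerivAt_gaussianPDFReal 0 1 w) pdf_ne).congr_deriv ?_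
  simp only [steinSolution, Pi.mul_apply, sub_zero, NNReal.coe_one, div_one]
  field_simp
  ring

theorem abs_setIntegral_gaussianPDFReal_mul_le (hg1 : ∀ x, |g x| ≤ 1) (s : Set ℝ) :
    |∫ x in s, gaussianPDFReal 0 1 x * g x| ≤ ∫ x in s, gaussianPDFReal 0 1 x := by
  rw [← Real.norm_eq_abs]
  refine norm_integral_le_of_norm_le (integrable_gaussianPDFReal 0 1).integrableOn
    (.of_forall fun x => ?_)
  rw [norm_mul, Real.norm_of_nonneg (gaussianPDFReal_nonneg 0 1 x)]
  exact mul_le_of_le_one_right (gaussianPDFReal_nonneg 0 1 x) (hg1 x)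

theorem integrable_gaussianPDFReal_mul (hg : Continuous g) (hg1 : ∀ x, |g x| ≤ 1) :
    Integrable fun x => gaussianPDFReal 0 1 x * g x :=
  (integrable_gaussianPDFReal 0 1).mul_bdd hg.aestronglyMeasurable (.of_forall hg1)

theorem abs_mul_steinSolution_le (hg : Continuous g) (hg1 : ∀ x, |g x| ≤ 1)
    (hg0 : ∫ x, g x ∂gaussianReal 0 1 = 0) (w : ℝ) : |w * steinSolution g w| ≤ 1 := by
  have pdf_pos : 0 < gaussianPDFReal 0 1 w := gaussianPDFReal_pos 0 1 w one_ne_zero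
  rw [steinSolution, ← mul_div_assoc, abs_div, abs_of_pos pdf_pos, div_le_one pdf_pos, abs_mul]
  rcases le_total 0 w with hw | hw
  · have tail_eq : ∫ x in Set.Iic w, gaussianPDFReal 0 1 x * g x =
        -∫ x in Set.Ioi w, gaussianPDFReal 0 1 x * g x := by
      have hgi := integrable_gaussianPDFReal_mul hg hg1
      rw [integral_gaussianReal_eq_integral_smul one_ne_zero] at hg0
      rw [← add_eq_zero_iff_eq_neg, intervalIntegral.integral_Iic_add_Ioi hgi.integrableOn
        hgi.integrableOn]
      exact hg0
    rw [tail_eq, abs_neg, abs_of_nonneg hw]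
    exact (mul_le_mul_of_nonneg_left (abs_setIntegral_gaussianPDFReal_mul_le hg1 _) hw).trans
      (mul_integral_Ioi_gaussianPDFReal_le w)
  · rw [abs_of_nonpos hw]
    exact (mul_le_mul_of_nonneg_left (abs_setIntegral_gaussianPDFReal_mul_le hg1 _)
      (neg_nonneg.2 hw)).trans (neg_mul_integral_Iic_gaussianPDFReal_le w)

theorem abs_steinSolution_le (hg : Continuous g) (hg1 : ∀ x, |g x| ≤ 1)
    (hg0 : ∫ x, g x ∂gaussianReal 0 1 = 0) (w : ℝ) : |steinSolution g w| ≤ 6 := by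
  rcases le_total |w| 1 with hw | hw
  · have numerator_le : |∫ x in Set.Iic w, gaussianPDFReal 0 1 x * g x| ≤ 1 :=
      calc _ ≤ ∫ x in Set.Iic w, gaussianPDFReal 0 1 x :=
            abs_setIntegral_gaussianPDFReal_mul_le hg1 _
        _ ≤ ∫ x, gaussianPDFReal 0 1 x := setIntegral_le_integral
            (integrable_gaussianPDFReal 0 1) (.of_forall (gaussianPDFReal_nonneg 0 1))
        _ = 1 := integral_gaussianPDFReal_eq_one 0 one_ne_zero
    have pdf_pos : 0 < gaussianPDFReal 0 1 w := gaussianPDFReal_pos 0 1 w one_ne_zero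
    rw [steinSolution, abs_div, abs_of_pos pdf_pos, div_le_iff₀ pdf_pos]
    exact numerator_le.trans (one_le_six_mul_gaussianPDFReal hw)
  · calc |steinSolution g w| ≤ |w| * |steinSolution g w| :=
          le_mul_of_one_le_left (abs_nonneg _) hw
      _ ≤ 6 := by
        rw [← abs_mul]
        linarith [abs_mul_steinSolution_le hg hg1 hg0 w]

theorem abs_mul_steinSolution_sub_le (hg : Continuous g) (hg1 : ∀ x, |g x| ≤ 1)
    (hg0 : ∫ x, g x ∂gaussianReal 0 1 = 0) (u y : ℝ) :
    |y * steinSolution g y - u * steinSolution g u| ≤ (6 + 2 * |u|) * |y - u| := by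
  have deriv_le : ∀ w, ‖w * steinSolution g w + g w‖ ≤ 2 := fun w => by
    linarith [norm_add_le (w * steinSolution g w) (g w), hg1 w, Real.norm_eq_abs (g w),
      abs_mul_steinSolution_le hg hg1 hg0 w, Real.norm_eq_abs (w * steinSolution g w)]
  have lipschitz : |steinSolution g y - steinSolution g u| ≤ 2 * |y - u| :=
    convex_univ.norm_image_sub_le_of_norm_hasDerivWithin_le
      (fun w _ => (hasDerivAt_steinSolution hg
        (integrable_gaussianPDFReal_mul hg hg1) w).hasDerivWithinAt)
      (fun w _ => deriv_le w) (Set.mem_univ u) (Set.mem_univ y)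
  calc |y * steinSolution g y - u * steinSolution g u|
      = |(y - u) * steinSolution g y + u * (steinSolution g y - steinSolution g u)| := by ring_nf
    _ ≤ |y - u| * |steinSolution g y| + |u| * |steinSolution g y - steinSolution g u| := by
        simpa only [abs_mul] using abs_add_le ((y - u) * steinSolution g y)
          (u * (steinSolution g y - steinSolution g u))
    _ ≤ |y - u| * 6 + |u| * (2 * |y - u|) := by
        gcongr
        exact abs_steinSolution_le hg hg1 hg0 y
    _ = (6 + 2 * |u|) * |y - u| := by ring

end SteinEquation

section Comparison

theorem stepAverage_pow_succ_apply_zero_le {h : ℝ} {n : ℕ} (hh : 0 < h) (hn : (n + 1) * h ^ 2 = 1)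
    {g ψ : ℝ → ℝ} (hg : Continuous g) (hg1 : ∀ x, |g x| ≤ 1)
    (hg0 : ∫ x, g x ∂gaussianReal 0 1 = 0) (hψ : ∀ u y, |y - u| ≤ 2 * h → ψ u ≤ g y) :
    (stepAverage h ^ (n + 1)) ψ 0 ≤ 16 * h := by
  set f := steinSolution g
  -- The quadratic term pays for the linear growth of the modulus of continuity of `y ↦ y * f y`.
  let H : ℝ → ℝ := id * f + ψ - Function.const ℝ (14 * h) - (2 * h) • (id * id)
  have H_le : ∀ u y, |y - u| ≤ 2 * h → H u ≤ y * f y + g y := by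
    intro u y huy
    have increment : |y * f y - u * f u| ≤ (6 + 2 * |u|) * (2 * h) :=
      (abs_mul_steinSolution_sub_le hg hg1 hg0 u y).trans (by gcongr)
    have two_abs_le : 2 * |u| ≤ 1 + u * u := by nlinarith [sq_nonneg (|u| - 1), abs_mul_abs_self u]
    simp only [H, Pi.sub_apply, Pi.add_apply, Pi.mul_apply, Pi.smul_apply, id_eq, smul_eq_mul,
      Function.const_apply]
    nlinarith [neg_le_of_abs_le increment, hψ u y huy]
  have compare := stepAverage_pow_succ_le_of_le_deriv hh hn
    (hasDerivAt_steinSolution hg (integrable_gaussianPDFReal_mul hg hg1)) H_le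
  simp only [H, map_sub, map_add, map_smul, stepAverage_pow_const, Pi.sub_apply, Pi.add_apply,
    Pi.smul_apply, smul_eq_mul, Function.const_apply, stepAverage_pow_succ_sq_apply_zero hn]
    at compare
  linarith

theorem stepAverage_pow_succ_apply_zero_le_integral {h : ℝ} {n : ℕ} (hh : 0 < h)
    (hn : (n + 1) * h ^ 2 = 1) {φ ψ : ℝ → ℝ} (hφ : Continuous φ)
    (hφ01 : ∀ x, φ x ∈ Set.Icc (0 : ℝ) 1) (hψ : ∀ u y, |y - u| ≤ 2 * h → ψ u ≤ φ y) :
    (stepAverage h ^ (n + 1)) ψ 0 ≤ ∫ x, φ x ∂gaussianReal 0 1 + 16 * h := by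
  have hφi : Integrable φ (gaussianReal 0 1) :=
    .of_bound hφ.aestronglyMeasurable 1 (.of_forall fun x => by
      rw [Real.norm_of_nonneg (hφ01 x).1]; exact (hφ01 x).2)
  set m := ∫ x, φ x ∂gaussianReal 0 1
  have m_nonneg : 0 ≤ m := integral_nonneg fun x => (hφ01 x).1
  have m_le_one : m ≤ 1 := by
    simpa using integral_mono hφi (integrable_const 1) fun x => (hφ01 x).2
  have centred : ∫ x, (φ x - m) ∂gaussianReal 0 1 = 0 := by
    rw [integral_sub hφi (integrable_const m), integral_const, probReal_univ, one_smul, sub_self]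
  have abs_le_one : ∀ x, |φ x - m| ≤ 1 := fun x =>
    abs_le.2 ⟨by linarith [(hφ01 x).1], by linarith [(hφ01 x).2]⟩
  have bound := stepAverage_pow_succ_apply_zero_le (ψ := ψ - Function.const ℝ m) hh hn
    (hφ.sub continuous_const) abs_le_one centred fun u y huy => sub_le_sub_right (hψ u y huy) m
  rw [map_sub, stepAverage_pow_const, Pi.sub_apply, Function.const_apply] at bound
  linarith

theorem randomWalkLaw_succ_real_le {h : ℝ} {n : ℕ} (hh : 0 < h) (hn : (n + 1) * h ^ 2 = 1)
    {B : Set ℝ} (hB : MeasurableSet B) :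
    (randomWalkLaw h (n + 1)).real B ≤
      (gaussianReal 0 1).real (Metric.thickening (3 * h) B) + 16 * h := by
  set φ := thickenedIndicator hh (Metric.cthickening (2 * h) B)
  have φ_eq_one : ∀ u ∈ B, ∀ y, |y - u| ≤ 2 * h → φ y = 1 := fun u hu y huy =>
    thickenedIndicator_one hh _ (Metric.mem_cthickening_of_dist_le y u _ B hu huy)
  have φ_le_one : ∀ x, (φ x : ℝ) ≤ 1 := fun x => mod_cast thickenedIndicator_le_one hh _ x
  have φ_le : ∀ x, (φ x : ℝ) ≤ (Metric.thickening (3 * h) B).indicator 1 x := fun x => by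
    refine Set.le_indicator_apply (fun _ => φ_le_one x) fun hx => ?_
    rw [thickenedIndicator_zero hh _ fun hx' => hx ?_, NNReal.coe_zero]
    convert Metric.thickening_cthickening_subset h (by positivity) B hx' using 2
    ring
  calc (randomWalkLaw h (n + 1)).real B
      = (stepAverage h ^ (n + 1)) (B.indicator 1) 0 := randomWalkLaw_real_apply h (n + 1) hB
    _ ≤ ∫ x, (φ x : ℝ) ∂gaussianReal 0 1 + 16 * h :=
        stepAverage_pow_succ_apply_zero_le_integral hh hn (by fun_prop)
          (fun x => ⟨NNReal.coe_nonneg _, φ_le_one x⟩)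
          fun u y huy => Set.indicator_apply_le' (fun hu => by simp [φ_eq_one u hu y huy])
            fun _ => NNReal.coe_nonneg _
    _ ≤ (gaussianReal 0 1).real (Metric.thickening (3 * h) B) + 16 * h := by
        rw [← integral_indicator_one Metric.isOpen_thickening.measurableSet]
        gcongr ?_ + _
        exact integral_mono_of_nonneg (.of_forall fun x => NNReal.coe_nonneg _)
          ((integrable_const 1).indicator Metric.isOpen_thickening.measurableSet)
          (.of_forall φ_le)

theorem abs_randomWalkLaw_succ_real_sub_gaussianReal_le {h : ℝ} {n : ℕ} (hh : 0 < h)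
    (hn : (n + 1) * h ^ 2 = 1) {s : Set ℝ} (hs : s.OrdConnected) :
    |(randomWalkLaw h (n + 1)).real s - (gaussianReal 0 1).real s| ≤ 28 * h := by
  have bound := abs_measureReal_sub_le_of_le_thickening
    (fun B hB => randomWalkLaw_succ_real_le hh hn hB) hs.measurableSet
  linarith [gaussianReal_real_thickening_frontier_le hs (by positivity : 0 ≤ 3 * h)]

end Comparison

section Multivariate

theorem ordConnected_preimage_update_of_convex {ι : Type*} [DecidableEq ι] {S : Set (ι → ℝ)}
    (hS : Convex ℝ S) (x : ι → ℝ) (i : ι) : (Function.update x i ⁻¹' S).OrdConnected := by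
  refine Convex.ordConnected (𝕜 := ℝ) fun a ha b hb s t hs ht hst => ?_
  have update_combo : Function.update x i (s • a + t • b) =
      s • Function.update x i a + t • Function.update x i b := by
    rw [← Function.update_smul, ← Function.update_smul, ← Function.update_add, ← add_smul, hst,
      one_smul]
  rw [Set.mem_preimage, update_combo]
  exact hS ha hb hs ht hst

variable {ι : Type*} [Fintype ι]

theorem abs_pi_randomWalkLaw_real_sub_le [DecidableEq ι] (n : ℕ) {S : Set (ι → ℝ)}
    (hSm : MeasurableSet S) (hS : ∀ x i, (Function.update x i ⁻¹' S).OrdConnected) :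
    |(Measure.pi fun _ : ι => randomWalkLaw (1 / √(n + 1 : ℕ)) (n + 1)).real S -
      (Measure.pi fun _ : ι => gaussianReal 0 1).real S| ≤
      28 * Fintype.card ι / √(n + 1 : ℕ) := by
  have step_pos : 0 < 1 / √(n + 1 : ℕ) := by positivity
  have variance_one : ((n : ℝ) + 1) * (1 / √(n + 1 : ℕ)) ^ 2 = 1 := by
    rw [div_pow, one_pow, Real.sq_sqrt (Nat.cast_nonneg _), Nat.cast_succ]
    exact mul_one_div_cancel (by positivity)
  refine (abs_pi_real_sub_pi_real_le _ _ hSm fun i x =>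
    abs_randomWalkLaw_succ_real_sub_gaussianReal_le step_pos variance_one (hS x i)).trans_eq ?_
  rw [Finset.sum_const, Finset.card_univ, nsmul_eq_mul]
  ring

theorem map_sum_pi_pi_rademacher (h : ℝ) (n : ℕ) :
    (Measure.pi fun _ : ι => Measure.pi fun _ : Fin n => rademacher h).map
      (fun X j => ∑ i, X j i) = Measure.pi fun _ => randomWalkLaw h n :=
  Measure.pi_map_pi (f := fun _ (x : Fin n → ℝ) => ∑ i, x i)
    (hμ := fun _ => inferInstanceAs (SigmaFinite (randomWalkLaw h n))) fun _ => by fun_prop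

theorem stmt_17_general [DecidableEq ι] {ε : ℝ} (hε : 0 ≤ ε) {N : ℕ}
    (hN : 28 * Fintype.card ι ≤ ε * √N) {S : Set (ι → ℝ)}
    (hS : ∀ x i, (Function.update x i ⁻¹' S).OrdConnected) (hSm : MeasurableSet S) :
    |((Measure.pi fun _ : ι => Measure.pi fun _ : Fin N => rademacher (1 / √N)).map
      fun X j => ∑ i, X j i).real S - (Measure.pi fun _ => gaussianReal 0 1).real S| ≤ ε := by
  rw [map_sum_pi_pi_rademacher]
  rcases N with _ | n
  · have : IsEmpty ι := Fintype.card_eq_zero_iff.1 (by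
      simp only [Nat.cast_zero, sqrt_zero, mul_zero] at hN
      exact_mod_cast (by linarith : (Fintype.card ι : ℝ) ≤ 0).antisymm (Nat.cast_nonneg _))
    rwa [Subsingleton.elim (fun _ : ι => randomWalkLaw _ 0) fun _ => gaussianReal 0 1, sub_self,
      abs_zero]
  · exact (abs_pi_randomWalkLaw_real_sub_le n hSm hS).trans
      ((div_le_iff₀ (by positivity)).2 hN)

theorem natCast_le_rpow {s : ℝ} (hs : 1 ≤ s) (d : ℕ) : (d : ℝ) ≤ (d : ℝ) ^ s := by
  rcases Nat.eq_zero_or_pos d with rfl | hd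
  · exact_mod_cast Real.rpow_nonneg le_rfl s
  · exact Real.self_le_rpow_of_one_le (by exact_mod_cast hd) hs

theorem mul_natCast_le_mul_sqrt {d N : ℕ} {ε : ℝ} (hε : 0 < ε)
    (hN : ((42 * (d : ℝ) ^ ((7 : ℝ) / 4) + 16 * (d : ℝ) ^ ((3 : ℝ) / 2)) / ε) ^ 2 ≤ N) :
    28 * (d : ℝ) ≤ ε * √N := by
  calc 28 * (d : ℝ) ≤ 42 * (d : ℝ) ^ ((7 : ℝ) / 4) + 16 * (d : ℝ) ^ ((3 : ℝ) / 2) := by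
        linarith [natCast_le_rpow (by norm_num : (1 : ℝ) ≤ 7 / 4) d, Nat.cast_nonneg (α := ℝ) d,
          Real.rpow_nonneg (Nat.cast_nonneg (α := ℝ) d) (3 / 2)]
    _ ≤ √N * ε := (div_le_iff₀ hε).1 (Real.le_sqrt_of_sq_le hN)
    _ = ε * √N := mul_comm _ _

end Multivariate

/-- Berry–Esseen approximation of the standard Gaussian vector in `ℝ^d` by a vector of
i.i.d. normalized binomials: if `N ≥ ((42·d^{7/4} + 16·d^{3/2})/ε)²`, `s` is the vector
whose `d` coordinates are i.i.d. sums of `N` independent uniform `±1/√N` variables, and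
`a ∼ N(0, I_d)`, then for every convex measurable `S ⊆ ℝ^d`,
`|Pr[s ∈ S] − Pr[a ∈ S]| ≤ ε`. -/
theorem stmt_17 (d : ℕ) (ε : ℝ) (hε : ε ∈ Set.Ioo (0 : ℝ) 1) (N : ℕ)
    (hN : ((42 * (d : ℝ) ^ ((7 : ℝ) / 4) + 16 * (d : ℝ) ^ ((3 : ℝ) / 2)) / ε) ^ 2 ≤ N)
    (S : Set (Fin d → ℝ)) (hS : Convex ℝ S) (hSm : MeasurableSet S) :
    -- the uniform distribution on `{−1/√N, 1/√N}`
    let ν : Measure ℝ :=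
      (2 : ℝ≥0∞)⁻¹ • Measure.dirac (-(1 / Real.sqrt N)) +
        (2 : ℝ≥0∞)⁻¹ • Measure.dirac (1 / Real.sqrt N)
    -- the distribution of `s = (s₁, …, s_d)`, each coordinate an independent
    -- normalized binomial, i.e. a sum of `N` independent uniform `±1/√N` variables
    let μs : Measure (Fin d → ℝ) :=
      Measure.map (fun X : Fin d → Fin N → ℝ => fun j => ∑ i, X j i)
        (Measure.pi fun _ : Fin d => Measure.pi fun _ : Fin N => ν)
    -- the standard Gaussian vector in `ℝ^d`
    let μa : Measure (Fin d → ℝ) := Measure.pi fun _ : Fin d => gaussianReal 0 1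
    |(μs S).toReal - (μa S).toReal| ≤ ε := by
  exact stmt_17_general hε.1.le (by simpa using mul_natCast_le_mul_sqrt hε.1 hN)
    (ordConnected_preimage_update_of_convex hS) hSm
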